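/- arXiv:math/0512272 — 2 statements merged into one kernel-verified Lean document; each statement's English description precedes it below -/
import Mathlib

section
/- Let Ω be an open subset of ℝⁿ and let f = (u₁, v₁) and g = (u₂, v₂) be H-continuous pairs on Ω. Then there exists a unique H-continuous pair (p_l, p_u) on Ω satisfying u₁(x) + u₂(x) ≤ p_l(x) ≤ p_u(x) ≤ v₁(x) + v₂(x) for all x ∈ Ω. -/
open Set

/-- Points of `ℝⁿ`. -/
abbrev Pt (n : ℕ) := EuclideanSpace ℝ (Fin n)

/-- Lower Baire operator `I(D,Ω,f)(x) = sup_{δ>0} inf { f y : y ∈ B_δ(x) ∩ D }`,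
where `B_δ(x) = { y ∈ Ω : ‖y - x‖ < δ }`. -/
noncomputable def Ilow {n : ℕ} (D Om : Set (Pt n)) (f : Pt n → ℝ) (x : Pt n) : ℝ :=
  sSup {a : ℝ | ∃ δ : ℝ, 0 < δ ∧
    a = sInf (f '' {y | y ∈ Om ∧ ‖y - x‖ < δ ∧ y ∈ D})}

/-- Upper Baire operator `S(D,Ω,f)(x) = inf_{δ>0} sup { f y : y ∈ B_δ(x) ∩ D }`. -/
noncomputable def Shigh {n : ℕ} (D Om : Set (Pt n)) (f : Pt n → ℝ) (x : Pt n) : ℝ :=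
  sInf {a : ℝ | ∃ δ : ℝ, 0 < δ ∧
    a = sSup (f '' {y | y ∈ Om ∧ ‖y - x‖ < δ ∧ y ∈ D})}

/-- `f`, defined on `D ⊆ Ω`, is locally bounded relative to `Ω`. -/
def LocBddOn {n : ℕ} (Om D : Set (Pt n)) (f : Pt n → ℝ) : Prop :=
  ∀ x ∈ Om, ∃ δ : ℝ, 0 < δ ∧ ∃ M : ℝ,
    ∀ y, y ∈ Om → ‖y - x‖ < δ → y ∈ D → |f y| < M

/-- `(u, v)` encodes an interval-valued function `x ↦ [u x, v x]` on `Om`. -/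
def IntervalPair {n : ℕ} (Om : Set (Pt n)) (u v : Pt n → ℝ) : Prop :=
  LocBddOn Om Om u ∧ LocBddOn Om Om v ∧ ∀ x ∈ Om, u x ≤ v x

/-- The pair `(u, v)` is S-continuous on `Om`: `I(u) = u` and `S(v) = v`. -/
def SCont {n : ℕ} (Om : Set (Pt n)) (u v : Pt n → ℝ) : Prop :=
  ∀ x ∈ Om, Ilow Om Om u x = u x ∧ Shigh Om Om v x = v x

/-- The pair `(u, v)` is Hausdorff continuous on `Om`. -/
def HCont {n : ℕ} (Om : Set (Pt n)) (u v : Pt n → ℝ) : Prop :=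
  ∀ p q : Pt n → ℝ, LocBddOn Om Om p → LocBddOn Om Om q →
    (∀ x ∈ Om, u x ≤ p x ∧ p x ≤ q x ∧ q x ≤ v x) →
    ∀ x ∈ Om, Ilow Om Om p x = u x ∧ Shigh Om Om q x = v x

/-- `(u, v)` is an H-continuous interval pair on `Om`. -/
def HContPair {n : ℕ} (Om : Set (Pt n)) (u v : Pt n → ℝ) : Prop :=
  IntervalPair Om u v ∧ HCont Om u v

/-- Lower endpoint of the pointwise interval product. -/
noncomputable def imin {n : ℕ} (u₁ v₁ u₂ v₂ : Pt n → ℝ) (x : Pt n) : ℝ :=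
  min (min (u₁ x * u₂ x) (u₁ x * v₂ x)) (min (v₁ x * u₂ x) (v₁ x * v₂ x))

/-- Upper endpoint of the pointwise interval product. -/
noncomputable def imax {n : ℕ} (u₁ v₁ u₂ v₂ : Pt n → ℝ) (x : Pt n) : ℝ :=
  max (max (u₁ x * u₂ x) (u₁ x * v₂ x)) (max (v₁ x * u₂ x) (v₁ x * v₂ x))

/-- `(pl, pu)` is the H-continuous pair contained pointwise in the interval sum of
`(u₁, v₁)` and `(u₂, v₂)`, i.e. `(pl, pu) = (u₁,v₁) ⊕ (u₂,v₂)`. -/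
def IsOplus {n : ℕ} (Om : Set (Pt n)) (u₁ v₁ u₂ v₂ pl pu : Pt n → ℝ) : Prop :=
  HContPair Om pl pu ∧
    ∀ x ∈ Om, u₁ x + u₂ x ≤ pl x ∧ pl x ≤ pu x ∧ pu x ≤ v₁ x + v₂ x

/-- `(ql, qu)` is the H-continuous pair contained pointwise in the interval product of
`(u₁, v₁)` and `(u₂, v₂)`, i.e. `(ql, qu) = (u₁,v₁) ⊗ (u₂,v₂)`. -/
def IsOtimes {n : ℕ} (Om : Set (Pt n)) (u₁ v₁ u₂ v₂ ql qu : Pt n → ℝ) : Prop :=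
  HContPair Om ql qu ∧
    ∀ x ∈ Om, imin u₁ v₁ u₂ v₂ x ≤ ql x ∧ ql x ≤ qu x ∧ qu x ≤ imax u₁ v₁ u₂ v₂ x

/-!
The real-valued `sSup` and `sInf` in the Baire operators force an H-continuous pair to be bounded on
bounded sets, and on such functions `Shigh` produces the least upper semicontinuous majorant and
`Ilow` the greatest lower semicontinuous minorant. Hausdorff continuity of `(u, v)` thus becomes a
condition meaningful on every topological space: `u` is the greatest lower semicontinuous minorant
of `v`, and `v` is the least upper semicontinuous majorant of `u`.

Existence: between the lower semicontinuous `u₁ + u₂` and the upper semicontinuous `v₁ + v₂`, let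
`q` be the least upper semicontinuous majorant of `u₁ + u₂` and `p` the greatest lower
semicontinuous minorant of `q`; then `(p, q)` is Hausdorff continuous.

Uniqueness: raising `u` by `ε` on an open set where `v - u ≥ ε` would give a larger lower
semicontinuous minorant of `v`, so the open set `{v - u < ε}` is dense. Both gaps `vᵢ - uᵢ` are thus
small on a common dense set, so a lower semicontinuous function below `v₁ + v₂` is at most any upper
semicontinuous function above `u₁ + u₂`. Applied to the endpoints of two Hausdorff continuous pairs
in the interval sum, this forces the pairs to coincide.
-/

section Envelope

variable {X β : Type*} [TopologicalSpace X]

/-- `g` is the lower semicontinuous envelope of `f`: its greatest lower semicontinuous minorant. -/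
def IsLowerEnvelope [Preorder β] (f g : X → β) : Prop :=
  IsGreatest {h | LowerSemicontinuous h ∧ h ≤ f} g

/-- `g` is the upper semicontinuous envelope of `f`: its least upper semicontinuous majorant. -/
def IsUpperEnvelope [Preorder β] (f g : X → β) : Prop :=
  IsLeast {h | UpperSemicontinuous h ∧ f ≤ h} g

/-- Hausdorff continuity of the interval-valued function `[u, v]` on a topological space, in terms
of semicontinuous envelopes. -/
structure IsHausdorffPair [Preorder β] (u v : X → β) : Prop where
  isLowerEnvelope : IsLowerEnvelope v u
  isUpperEnvelope : IsUpperEnvelope u v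

section Preorder

variable [Preorder β] {f g h u v u' v' : X → β}

theorem IsLowerEnvelope.lowerSemicontinuous (hg : IsLowerEnvelope f g) : LowerSemicontinuous g :=
  hg.1.1

theorem IsLowerEnvelope.le (hg : IsLowerEnvelope f g) : g ≤ f :=
  hg.1.2

theorem IsLowerEnvelope.le_of_le (hg : IsLowerEnvelope f g) (hh : LowerSemicontinuous h)
    (hhf : h ≤ f) : h ≤ g :=
  hg.2 ⟨hh, hhf⟩

theorem IsUpperEnvelope.upperSemicontinuous (hg : IsUpperEnvelope f g) : UpperSemicontinuous g :=
  hg.1.1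

theorem IsUpperEnvelope.le (hg : IsUpperEnvelope f g) : f ≤ g :=
  hg.1.2

theorem IsUpperEnvelope.le_of_le (hg : IsUpperEnvelope f g) (hh : UpperSemicontinuous h)
    (hfh : f ≤ h) : g ≤ h :=
  hg.2 ⟨hh, hfh⟩

theorem IsHausdorffPair.lowerSemicontinuous (h : IsHausdorffPair u v) : LowerSemicontinuous u :=
  h.isLowerEnvelope.lowerSemicontinuous

theorem IsHausdorffPair.upperSemicontinuous (h : IsHausdorffPair u v) : UpperSemicontinuous v :=
  h.isUpperEnvelope.upperSemicontinuous

theorem IsHausdorffPair.le (h : IsHausdorffPair u v) : u ≤ v :=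
  h.isLowerEnvelope.le

theorem IsHausdorffPair.isLowerEnvelope_of_mem_Icc (h : IsHausdorffPair u v)
    (hf : f ∈ Icc u v) : IsLowerEnvelope f u :=
  ⟨⟨h.lowerSemicontinuous, hf.1⟩, fun _ hw => h.isLowerEnvelope.le_of_le hw.1 (hw.2.trans hf.2)⟩

theorem IsHausdorffPair.isUpperEnvelope_of_mem_Icc (h : IsHausdorffPair u v)
    (hf : f ∈ Icc u v) : IsUpperEnvelope f v :=
  ⟨⟨h.upperSemicontinuous, hf.2⟩, fun _ hw => h.isUpperEnvelope.le_of_le hw.1 (hf.1.trans hw.2)⟩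

theorem IsHausdorffPair.mono_of_left_le_right (h : IsHausdorffPair u v)
    (h' : IsHausdorffPair u' v') (hle : u ≤ v') : u ≤ u' ∧ v ≤ v' :=
  ⟨h'.isLowerEnvelope.le_of_le h.lowerSemicontinuous hle,
    h.isUpperEnvelope.le_of_le h'.upperSemicontinuous hle⟩

end Preorder

section ConditionallyComplete

variable [ConditionallyCompleteLinearOrder β] {f u v : X → β}

theorem exists_isUpperEnvelope (hv : UpperSemicontinuous v) (hfv : f ≤ v) :
    ∃ g, IsUpperEnvelope f g := by
  let M := {h : X → β // UpperSemicontinuous h ∧ f ≤ h}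
  have : Nonempty M := ⟨⟨v, hv, hfv⟩⟩
  have hbdd (x : X) : BddBelow (range fun h : M => h.1 x) :=
    ⟨f x, forall_mem_range.2 fun h => h.2.2 x⟩
  exact ⟨fun x => ⨅ h : M, h.1 x,
    ⟨upperSemicontinuous_ciInf hbdd fun h => h.2.1, fun x => le_ciInf fun h => h.2.2 x⟩,
    fun h hh x => ciInf_le (hbdd x) ⟨h, hh⟩⟩

theorem exists_isLowerEnvelope (hu : LowerSemicontinuous u) (huf : u ≤ f) :
    ∃ g, IsLowerEnvelope f g :=
  exists_isUpperEnvelope (β := βᵒᵈ) hu huf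

theorem exists_isHausdorffPair_between (hu : LowerSemicontinuous u) (hv : UpperSemicontinuous v)
    (huv : u ≤ v) : ∃ p q, IsHausdorffPair p q ∧ u ≤ p ∧ q ≤ v := by
  obtain ⟨q, hq⟩ := exists_isUpperEnvelope hv huv
  obtain ⟨p, hp⟩ := exists_isLowerEnvelope hu hq.le
  have hup : u ≤ p := hp.le_of_le hu hq.le
  exact ⟨p, q, ⟨hp, ⟨hq.upperSemicontinuous, hp.le⟩,
    fun w hw => hq.le_of_le hw.1 (hup.trans hw.2)⟩, hup, hq.le_of_le hv huv⟩

end ConditionallyComplete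

section OrderedGroup

variable [AddCommGroup β] [LinearOrder β] [IsOrderedAddMonoid β] [TopologicalSpace β]
  [OrderTopology β] {f g u v : X → β} {ε : β}

theorem IsUpperEnvelope.neg (h : IsUpperEnvelope f g) : IsLowerEnvelope (-f) (-g) :=
  ⟨⟨continuous_neg.comp_upperSemicontinuous_antitone h.upperSemicontinuous fun _ _ => neg_le_neg,
    neg_le_neg h.le⟩,
    fun _ hw => le_neg_of_le_neg <| h.le_of_le
      (continuous_neg.comp_lowerSemicontinuous_antitone hw.1 fun _ _ => neg_le_neg)
      (le_neg_of_le_neg hw.2)⟩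

theorem upperSemicontinuous_sub (hv : UpperSemicontinuous v)
    (hu : LowerSemicontinuous u) : UpperSemicontinuous (v - u) := by
  rw [sub_eq_add_neg]
  exact hv.add (continuous_neg.comp_lowerSemicontinuous_antitone hu fun _ _ => neg_le_neg)

theorem IsLowerEnvelope.dense_setOf_sub_lt (h : IsLowerEnvelope v u) (hε : 0 < ε) :
    Dense {x | v x - u x < ε} := by
  rw [← compl_compl {x | v x - u x < ε}, ← interior_eq_empty_iff_dense_compl,
    eq_empty_iff_forall_notMem]
  set U := interior {x | v x - u x < ε}ᶜ
  intro x hx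
  have hlsc : LowerSemicontinuous (u + U.indicator fun _ => ε) :=
    h.lowerSemicontinuous.add (isOpen_interior.lowerSemicontinuous_indicator hε.le)
  have hle : u + U.indicator (fun _ => ε) ≤ v := by
    intro y
    by_cases hy : y ∈ U
    · have hgap : ε ≤ v y - u y := not_lt.1 (interior_subset hy)
      simpa [hy] using le_sub_iff_add_le'.1 hgap
    · simpa [hy] using h.le y
  have hux : u x + ε ≤ u x := by simpa [hx] using h.le_of_le hlsc hle x
  exact hux.not_gt (lt_add_of_pos_right _ hε)

theorem IsHausdorffPair.isOpen_setOf_sub_lt (h : IsHausdorffPair u v) (ε : β) :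
    IsOpen {x | v x - u x < ε} :=
  (upperSemicontinuous_sub h.upperSemicontinuous h.lowerSemicontinuous).isOpen_preimage ε

end OrderedGroup

section Real

variable {f g u₁ v₁ u₂ v₂ : X → ℝ}

theorem IsHausdorffPair.le_of_le_add_of_add_le (h₁ : IsHausdorffPair u₁ v₁)
    (h₂ : IsHausdorffPair u₂ v₂) (hf : LowerSemicontinuous f) (hg : UpperSemicontinuous g)
    (hfv : f ≤ v₁ + v₂) (hug : u₁ + u₂ ≤ g) : f ≤ g := by
  intro x
  refine le_of_forall_pos_le_add fun ε hε => ?_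
  have hdense : Dense ({x | v₁ x - u₁ x < ε / 2} ∩ {x | v₂ x - u₂ x < ε / 2}) :=
    (h₁.isLowerEnvelope.dense_setOf_sub_lt (half_pos hε)).inter_of_isOpen_left
      (h₂.isLowerEnvelope.dense_setOf_sub_lt (half_pos hε)) (h₁.isOpen_setOf_sub_lt _)
  have hclosed : IsClosed {x | -ε ≤ g x - f x} :=
    (upperSemicontinuous_sub hg hf).isClosed_preimage (-ε)
  have hsub : {x | v₁ x - u₁ x < ε / 2} ∩ {x | v₂ x - u₂ x < ε / 2} ⊆ {x | -ε ≤ g x - f x} := by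
    rintro y ⟨hy₁, hy₂⟩
    have hfy : f y ≤ v₁ y + v₂ y := hfv y
    have hgy : u₁ y + u₂ y ≤ g y := hug y
    rw [mem_ofPred_eq] at hy₁ hy₂ ⊢
    linarith
  have hx : -ε ≤ g x - f x := closure_minimal hsub hclosed (hdense x)
  linarith

theorem IsHausdorffPair.existsUnique_between_add (h₁ : IsHausdorffPair u₁ v₁)
    (h₂ : IsHausdorffPair u₂ v₂) :
    ∃! p : (X → ℝ) × (X → ℝ), IsHausdorffPair p.1 p.2 ∧ u₁ + u₂ ≤ p.1 ∧ p.2 ≤ v₁ + v₂ := by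
  obtain ⟨p, q, hpq, hp, hq⟩ := exists_isHausdorffPair_between
    (h₁.lowerSemicontinuous.add h₂.lowerSemicontinuous)
    (h₁.upperSemicontinuous.add h₂.upperSemicontinuous) (add_le_add h₁.le h₂.le)
  refine ⟨(p, q), ⟨hpq, hp, hq⟩, ?_⟩
  rintro ⟨p', q'⟩ ⟨hpq', hp', hq'⟩
  have hle := hpq'.mono_of_left_le_right hpq <| h₁.le_of_le_add_of_add_le h₂
    hpq'.lowerSemicontinuous hpq.upperSemicontinuous (hpq'.le.trans hq') (hp.trans hpq.le)
  have hge := hpq.mono_of_left_le_right hpq' <| h₁.le_of_le_add_of_add_le h₂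
    hpq.lowerSemicontinuous hpq'.upperSemicontinuous (hpq.le.trans hq) (hp'.trans hpq'.le)
  exact Prod.ext (hle.1.antisymm hge.1) (hle.2.antisymm hge.2)

end Real

end Envelope

section BddAboveOnBounded

variable {E β : Type*} [Bornology E] [Preorder β] {s : Set E} {f g : E → β}

/-- `f` is bounded above on every bounded part of `s`; boundedness below is expressed through `-f`.
Local boundedness would not suffice for `Shigh`: the real `sSup` of a set unbounded above is `0`, so
a large ball on which `f` is unbounded could spoil the infimum over all balls. -/
def BddAboveOnBounded (s : Set E) (f : E → β) : Prop :=
  ∀ B, Bornology.IsBounded B → BddAbove (f '' (s ∩ B))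

theorem BddAboveOnBounded.mono (hg : BddAboveOnBounded s g) (hfg : ∀ x ∈ s, f x ≤ g x) :
    BddAboveOnBounded s f := by
  intro B hB
  obtain ⟨M, hM⟩ := hg B hB
  exact ⟨M, forall_mem_image.2 fun x hx => (hfg x hx.1).trans (hM (mem_image_of_mem g hx))⟩

theorem BddAboveOnBounded.add [Add β] [AddLeftMono β] [AddRightMono β]
    (hf : BddAboveOnBounded s f) (hg : BddAboveOnBounded s g) : BddAboveOnBounded s (f + g) := by
  intro B hB
  obtain ⟨M, hM⟩ := hf B hB
  obtain ⟨N, hN⟩ := hg B hB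
  exact ⟨M + N, forall_mem_image.2 fun x hx =>
    add_le_add (hM (mem_image_of_mem f hx)) (hN (mem_image_of_mem g hx))⟩

end BddAboveOnBounded

section Baire

open Filter Topology Metric

variable {n : ℕ} {Om : Set (Pt n)} {f u v : Pt n → ℝ} {x : Pt n} {a : ℝ}

theorem BddAboveOnBounded.locBddOn (hf : BddAboveOnBounded Om f)
    (hf' : BddAboveOnBounded Om (-f)) : LocBddOn Om Om f := by
  intro x _
  obtain ⟨M, hM⟩ := hf (ball x 1) isBounded_ball
  obtain ⟨N, hN⟩ := hf' (ball x 1) isBounded_ball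
  refine ⟨1, one_pos, max M N + 1, fun y hy hyx _ => ?_⟩
  have hmem : y ∈ Om ∩ ball x 1 := ⟨hy, mem_ball_iff_norm.2 hyx⟩
  exact (abs_le'.2 ⟨(hM (mem_image_of_mem f hmem)).trans (le_max_left M N),
    (hN (mem_image_of_mem (-f) hmem)).trans (le_max_right M N)⟩).trans_lt (lt_add_one _)

theorem shigh_eq_iInf (Om : Set (Pt n)) (f : Pt n → ℝ) (x : Pt n) :
    Shigh Om Om f x = ⨅ δ : Ioi (0 : ℝ), sSup (f '' (Om ∩ ball x δ)) := by
  have hball (δ : ℝ) : {y | y ∈ Om ∧ ‖y - x‖ < δ ∧ y ∈ Om} = Om ∩ ball x δ := by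
    ext y
    simp only [mem_ofPred_eq, mem_inter_iff, mem_ball_iff_norm]
    tauto
  simp only [Shigh, hball, iInf]
  congr 1
  ext a
  simp [eq_comm]

theorem ilow_eq_neg_shigh_neg (D Om : Set (Pt n)) (f : Pt n → ℝ) :
    Ilow D Om f = -Shigh D Om (-f) := by
  have himage (s : Set (Pt n)) : sSup ((-f) '' s) = -sInf (f '' s) := by
    rw [← Real.sSup_neg, ← image_neg_eq_neg, image_image]
    rfl
  ext x
  rw [Pi.neg_apply, Ilow, Shigh, ← Real.sSup_neg]
  simp only [himage]
  congr 1
  ext a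
  simp [neg_eq_iff_eq_neg]

theorem bddBelow_range_sSup_image_ball (f : Pt n → ℝ) (hx : x ∈ Om) :
    BddBelow (range fun δ : Ioi (0 : ℝ) => sSup (f '' (Om ∩ ball x δ))) := by
  refine ⟨min 0 (f x), forall_mem_range.2 fun δ => ?_⟩
  by_cases hb : BddAbove (f '' (Om ∩ ball x δ))
  · exact min_le_of_right_le (le_csSup hb (mem_image_of_mem f ⟨hx, mem_ball_self δ.2⟩))
  · exact min_le_of_left_le (Real.sSup_of_not_bddAbove hb).ge

theorem shigh_le_of_eventually_le (hx : x ∈ Om) (h : ∀ᶠ y in 𝓝[Om] x, f y ≤ a) :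
    Shigh Om Om f x ≤ a := by
  obtain ⟨δ, hδ, hball⟩ := nhdsWithin_basis_ball.eventually_iff.1 h
  calc Shigh Om Om f x ≤ sSup (f '' (Om ∩ ball x δ)) :=
        (shigh_eq_iInf Om f x).trans_le (ciInf_le (bddBelow_range_sSup_image_ball f hx) ⟨δ, hδ⟩)
    _ ≤ a := csSup_le ⟨f x, mem_image_of_mem f ⟨hx, mem_ball_self hδ⟩⟩
        (forall_mem_image.2 fun y hy => hball hy.symm)

theorem eventually_lt_of_shigh_lt (hf : BddAboveOnBounded Om f) (h : Shigh Om Om f x < a) :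
    ∀ᶠ y in 𝓝[Om] x, f y < a := by
  rw [shigh_eq_iInf] at h
  obtain ⟨δ, hδ⟩ := exists_lt_of_ciInf_lt h
  exact nhdsWithin_basis_ball.eventually_iff.2 ⟨δ, δ.2, fun y hy =>
    (le_csSup (hf _ isBounded_ball) (mem_image_of_mem f hy.symm)).trans_lt hδ⟩

theorem upperSemicontinuousOn_shigh (hf : BddAboveOnBounded Om f) :
    UpperSemicontinuousOn (Shigh Om Om f) Om := by
  intro x _ a ha
  obtain ⟨b, hb, hba⟩ := exists_between ha
  filter_upwards [eventually_eventually_nhdsWithin.2 (eventually_lt_of_shigh_lt hf hb),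
    self_mem_nhdsWithin] with y hy hyOm
  exact (shigh_le_of_eventually_le hyOm (hy.mono fun _ => le_of_lt)).trans_lt hba

theorem le_shigh (hf : BddAboveOnBounded Om f) (hx : x ∈ Om) : f x ≤ Shigh Om Om f x :=
  le_of_forall_gt fun _ ha => (eventually_lt_of_shigh_lt hf ha).self_of_nhdsWithin hx

theorem isUpperEnvelope_domRestrict_shigh (hf : BddAboveOnBounded Om f) :
    IsUpperEnvelope (Om.domRestrict f) (Om.domRestrict (Shigh Om Om f)) := by
  refine ⟨⟨upperSemicontinuousOn_iff_restrict.2 (upperSemicontinuousOn_shigh hf),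
    fun x => le_shigh hf x.2⟩, fun w ⟨hw, hfw⟩ x => le_of_forall_gt_imp_ge_of_dense fun a ha => ?_⟩
  refine shigh_le_of_eventually_le x.2 ((eventually_nhds_subtype_iff Om x _).1 ?_)
  exact (hw x a ha).mono fun y hy => (hfw y).trans hy.le

theorem isLowerEnvelope_domRestrict_ilow (hf : BddAboveOnBounded Om (-f)) :
    IsLowerEnvelope (Om.domRestrict f) (Om.domRestrict (Ilow Om Om f)) := by
  have hneg : -Om.domRestrict (-f) = Om.domRestrict f := neg_neg (Om.domRestrict f)
  rw [ilow_eq_neg_shigh_neg, ← hneg]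
  exact (isUpperEnvelope_domRestrict_shigh hf).neg

-- If `f` is unbounded above on one bounded set, it is so on a large ball around every point, where
-- the junk supremum `0` forces `f ≤ 0`.
theorem bddAboveOnBounded_of_shigh_eq (h : ∀ x ∈ Om, Shigh Om Om f x = f x) :
    BddAboveOnBounded Om f := by
  intro B hB
  by_contra hunbdd
  have hnonpos : ∀ y ∈ Om, f y ≤ 0 := by
    intro y hy
    obtain ⟨r, hr, hBr⟩ := hB.subset_ball_lt 0 y
    have hball : ¬BddAbove (f '' (Om ∩ ball y r)) := fun hb => hunbdd (hb.mono (by gcongr))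
    calc f y = ⨅ δ : Ioi (0 : ℝ), sSup (f '' (Om ∩ ball y δ)) := by rw [← h y hy, shigh_eq_iInf]
      _ ≤ sSup (f '' (Om ∩ ball y r)) := ciInf_le (bddBelow_range_sSup_image_ball f hy) ⟨r, hr⟩
      _ = 0 := Real.sSup_of_not_bddAbove hball
  exact hunbdd ⟨0, forall_mem_image.2 fun y hy => hnonpos y hy.1⟩

theorem bddAboveOnBounded_neg_of_ilow_eq (h : ∀ x ∈ Om, Ilow Om Om f x = f x) :
    BddAboveOnBounded Om (-f) :=
  bddAboveOnBounded_of_shigh_eq fun x hx => by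
    rw [Pi.neg_apply, ← h x hx, ilow_eq_neg_shigh_neg, Pi.neg_apply, neg_neg]

theorem HContPair.bddAboveOnBounded (h : HContPair Om u v) :
    BddAboveOnBounded Om v ∧ BddAboveOnBounded Om (-u) := by
  obtain ⟨⟨hu, hv, huv⟩, hcont⟩ := h
  have heq := hcont u v hu hv fun x hx => ⟨le_rfl, huv x hx, le_rfl⟩
  exact ⟨bddAboveOnBounded_of_shigh_eq fun x hx => (heq x hx).2,
    bddAboveOnBounded_neg_of_ilow_eq fun x hx => (heq x hx).1⟩

theorem HContPair.isHausdorffPair_domRestrict (h : HContPair Om u v) :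
    IsHausdorffPair (Om.domRestrict u) (Om.domRestrict v) := by
  obtain ⟨hv_bdd, hu_bdd⟩ := h.bddAboveOnBounded
  obtain ⟨⟨hu, hv, huv⟩, hcont⟩ := h
  have hIv : Om.domRestrict (Ilow Om Om v) = Om.domRestrict u := domRestrict_eq_domRestrict_iff.2
    fun x hx => (hcont v v hv hv (fun y hy => ⟨huv y hy, le_rfl, le_rfl⟩) x hx).1
  have hSu : Om.domRestrict (Shigh Om Om u) = Om.domRestrict v := domRestrict_eq_domRestrict_iff.2
    fun x hx => (hcont u u hu hu (fun y hy => ⟨le_rfl, le_rfl, huv y hy⟩) x hx).2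
  exact ⟨hIv ▸ isLowerEnvelope_domRestrict_ilow (hu_bdd.mono fun x hx => neg_le_neg (huv x hx)),
    hSu ▸ isUpperEnvelope_domRestrict_shigh (hv_bdd.mono huv)⟩

theorem IsHausdorffPair.hContPair (h : IsHausdorffPair (Om.domRestrict u) (Om.domRestrict v))
    (hv : BddAboveOnBounded Om v) (hu : BddAboveOnBounded Om (-u)) : HContPair Om u v := by
  have huv (x) (hx : x ∈ Om) : u x ≤ v x := h.le ⟨x, hx⟩
  refine ⟨⟨(hv.mono huv).locBddOn hu, hv.locBddOn (hu.mono fun x hx => neg_le_neg (huv x hx)), huv⟩,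
    fun p q _ _ hpq x hx => ⟨?_, ?_⟩⟩
  · have hp : Om.domRestrict p ∈ Icc (Om.domRestrict u) (Om.domRestrict v) :=
      ⟨fun y => (hpq y y.2).1, fun y => (hpq y y.2).2.1.trans (hpq y y.2).2.2⟩
    have henv := isLowerEnvelope_domRestrict_ilow (hu.mono fun y hy => neg_le_neg (hpq y hy).1)
    exact congrFun (henv.unique (h.isLowerEnvelope_of_mem_Icc hp)) ⟨x, hx⟩
  · have hq : Om.domRestrict q ∈ Icc (Om.domRestrict u) (Om.domRestrict v) :=
      ⟨fun y => (hpq y y.2).1.trans (hpq y y.2).2.1, fun y => (hpq y y.2).2.2⟩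
    have henv := isUpperEnvelope_domRestrict_shigh (hv.mono fun y hy => (hpq y hy).2.2)
    exact congrFun (henv.unique (h.isUpperEnvelope_of_mem_Icc hq)) ⟨x, hx⟩

theorem hContPair_iff : HContPair Om u v ↔ IsHausdorffPair (Om.domRestrict u) (Om.domRestrict v) ∧
    BddAboveOnBounded Om v ∧ BddAboveOnBounded Om (-u) :=
  ⟨fun h => ⟨h.isHausdorffPair_domRestrict, h.bddAboveOnBounded⟩,
    fun h => h.1.hContPair h.2.1 h.2.2⟩

end Baire

theorem stmt7_general {n : ℕ} (Om : Set (Pt n))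
    (u₁ v₁ u₂ v₂ : Pt n → ℝ)
    (h₁ : HContPair Om u₁ v₁) (h₂ : HContPair Om u₂ v₂) :
    ∃ pl pu : Pt n → ℝ,
      (HContPair Om pl pu ∧
        ∀ x ∈ Om, u₁ x + u₂ x ≤ pl x ∧ pl x ≤ pu x ∧ pu x ≤ v₁ x + v₂ x) ∧
      ∀ ql qu : Pt n → ℝ, HContPair Om ql qu →
        (∀ x ∈ Om, u₁ x + u₂ x ≤ ql x ∧ ql x ≤ qu x ∧ qu x ≤ v₁ x + v₂ x) →
        ∀ x ∈ Om, ql x = pl x ∧ qu x = pu x := by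
  obtain ⟨H₁, hv₁, hu₁⟩ := hContPair_iff.1 h₁
  obtain ⟨H₂, hv₂, hu₂⟩ := hContPair_iff.1 h₂
  obtain ⟨⟨p, q⟩, ⟨hpq, hp, hq⟩, huniq⟩ := H₁.existsUnique_between_add H₂
  obtain ⟨pl, rfl⟩ := Subtype.val_injective.surjective_comp_right p
  obtain ⟨pu, rfl⟩ := Subtype.val_injective.surjective_comp_right q
  have hpl (x) (hx : x ∈ Om) : u₁ x + u₂ x ≤ pl x := hp ⟨x, hx⟩
  have hpu (x) (hx : x ∈ Om) : pu x ≤ v₁ x + v₂ x := hq ⟨x, hx⟩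
  refine ⟨pl, pu, ⟨hContPair_iff.2 ⟨hpq, (hv₁.add hv₂).mono hpu, (hu₁.add hu₂).mono fun x hx => ?_⟩,
    fun x hx => ⟨hpl x hx, hpq.le ⟨x, hx⟩, hpu x hx⟩⟩, fun ql qu hqlu hbtw x hx => ?_⟩
  · simpa [add_comm] using neg_le_neg (hpl x hx)
  · have heq := huniq (Om.domRestrict ql, Om.domRestrict qu) ⟨(hContPair_iff.1 hqlu).1,
      fun y => (hbtw y y.2).1, fun y => (hbtw y y.2).2.2⟩
    exact ⟨congrFun (congrArg Prod.fst heq) ⟨x, hx⟩, congrFun (congrArg Prod.snd heq) ⟨x, hx⟩⟩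

theorem stmt7 {n : ℕ} (Om : Set (Pt n)) (hOm : IsOpen Om)
    (u₁ v₁ u₂ v₂ : Pt n → ℝ)
    (h₁ : HContPair Om u₁ v₁) (h₂ : HContPair Om u₂ v₂) :
    ∃ pl pu : Pt n → ℝ,
      (HContPair Om pl pu ∧
        ∀ x ∈ Om, u₁ x + u₂ x ≤ pl x ∧ pl x ≤ pu x ∧ pu x ≤ v₁ x + v₂ x) ∧
      ∀ ql qu : Pt n → ℝ, HContPair Om ql qu →
        (∀ x ∈ Om, u₁ x + u₂ x ≤ ql x ∧ ql x ≤ qu x ∧ qu x ≤ v₁ x + v₂ x) →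
        ∀ x ∈ Om, ql x = pl x ∧ qu x = pu x := by
  exact stmt7_general Om u₁ v₁ u₂ v₂ h₁ h₂
end

section
/- Let Ω be an open subset of ℝⁿ and let f, g, h be H-continuous pairs on Ω. Then (f ⊕ g) ⊗ h = (f ⊗ h) ⊕ (g ⊗ h), where ⊕ (respectively ⊗) denotes the unique H-continuous pair contained in the pointwise interval sum (respectively product) of its two arguments. -/
/-! A Hausdorff continuous pair is determined by any of its selections `w`: its endpoints are `I(w)`
and `S(w)`. Hence two such pairs whose intervals meet at every point are equal, with `w` the maximum
of the two lower endpoints, and since lower endpoints are lower semicontinuous and upper ones upper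
semicontinuous, it is enough that the intervals meet on a dense set.

Since `u` is a selection of `(u, v)`, the identity `S(u) = v` shows that `v - u` takes arbitrarily
small values near every point. As `v - u` is upper semicontinuous, the points of `Ω` where `u < v`
form a meagre set. By the Baire category theorem `f`, `g` and `h` are therefore simultaneously
single-valued on a dense subset of `Ω`, and there the claim is the distributive law in `ℝ`. -/

open Set

open Filter Metric Topology

section Topology

variable {X : Type*} [TopologicalSpace X] {s : Set X} {x : X}

theorem upperSemicontinuousOn_neg {β : Type*} [AddCommGroup β] [PartialOrder β]
    [IsOrderedAddMonoid β] {f : X → β} : UpperSemicontinuousOn (-f) s ↔ LowerSemicontinuousOn f s :=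
  ⟨fun h x hx c hc => (h x hx (-c) (neg_lt_neg hc : -f x < -c)).mono fun _ => neg_lt_neg_iff.1,
    fun h x hx c hc => (h x hx (-c) (neg_lt.1 hc)).mono fun _ => neg_lt.1⟩

theorem le_of_frequently_le_of_semicontinuousWithinAt {β : Type*} [LinearOrder β] [DenselyOrdered β]
    {f g : X → β} (hf : LowerSemicontinuousWithinAt f s x) (hg : UpperSemicontinuousWithinAt g s x)
    (h : ∃ᶠ y in 𝓝[s] x, f y ≤ g y) : f x ≤ g x := by
  by_contra! hlt
  obtain ⟨c, hgc, hcf⟩ := exists_between hlt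
  obtain ⟨y, hfg, hcy, hyc⟩ := (h.and_eventually ((hf c hcf).and (hg c hgc))).exists
  exact (hcy.trans_le hfg).not_gt hyc

theorem frequently_nhdsWithin_of_eventually_residual [BaireSpace X] {p : X → Prop} (hs : IsOpen s)
    (hx : x ∈ s) (h : ∀ᶠ y in residual X, y ∈ s → p y) : ∃ᶠ y in 𝓝[s] x, p y := by
  have hdense : ∃ᶠ y in 𝓝 x, y ∈ s → p y := mem_closure_iff_frequently.1 (dense_of_mem_residual h x)
  rw [hs.nhdsWithin_eq hx]
  exact (hdense.and_eventually (hs.mem_nhds hx)).mono fun y hy => hy.1 hy.2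

theorem eventually_residual_lt_of_frequently_lt {β : Type*} [Preorder β] {f : X → β} {c : β}
    (hs : IsOpen s) (hf : UpperSemicontinuousOn f s) (h : ∀ x ∈ s, ∃ᶠ y in 𝓝[s] x, f y < c) :
    ∀ᶠ x in residual X, x ∈ s → f x < c := by
  obtain ⟨V, hV, hsV⟩ := upperSemicontinuousOn_iff_preimage_Iio.1 hf c
  have hopen : IsOpen (s ∩ f ⁻¹' Iio c) := hsV ▸ hs.inter hV
  have hdense : s ⊆ closure (s ∩ f ⁻¹' Iio c) := fun x hx => mem_closure_iff_frequently.2 <|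
    (frequently_nhdsWithin_iff.1 (h x hx)).mono fun _ => And.symm
  filter_upwards [coborder_mem_residual hopen.isLocallyClosed] with x hx hxs
  by_contra hlt
  exact hx ⟨hdense hxs, fun hmem => hlt hmem.2⟩

theorem eventually_residual_nonpos_of_frequently_lt {f : X → ℝ} (hs : IsOpen s)
    (hf : UpperSemicontinuousOn f s) (h : ∀ x ∈ s, ∀ ε > 0, ∃ᶠ y in 𝓝[s] x, f y < ε) :
    ∀ᶠ x in residual X, x ∈ s → f x ≤ 0 := by
  have hlt (k : ℕ) : ∀ᶠ x in residual X, x ∈ s → f x < 1 / (k + 1) :=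
    eventually_residual_lt_of_frequently_lt hs hf fun x hx => h x hx _ Nat.one_div_pos_of_nat
  filter_upwards [eventually_countable_forall.2 hlt] with x hx hxs
  refine le_of_forall_pos_lt_add fun ε hε => ?_
  obtain ⟨k, hk⟩ := exists_nat_one_div_lt hε
  simpa only [zero_add] using (hx k hxs).trans hk

end Topology

section Baire

variable {n : ℕ} {D Om : Set (Pt n)} {f : Pt n → ℝ} {x : Pt n} {c δ : ℝ}

theorem Shigh_eq_sInf_image_ball :
    Shigh D Om f x = sInf ((fun δ => sSup (f '' (ball x δ ∩ (Om ∩ D)))) '' Ioi 0) := by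
  have hball (δ : ℝ) : {y | y ∈ Om ∧ ‖y - x‖ < δ ∧ y ∈ D} = ball x δ ∩ (Om ∩ D) := by
    ext y
    simp only [mem_ofPred_eq, mem_inter_iff, mem_ball_iff_norm]
    tauto
  simp only [Shigh, hball, image, mem_Ioi, eq_comm]

theorem Shigh_neg (D Om : Set (Pt n)) (f : Pt n → ℝ) (x : Pt n) :
    Shigh D Om (-f) x = -Ilow D Om f x := by
  have hneg (A : Set (Pt n)) : sSup ((-f) '' A) = -sInf (f '' A) := by
    rw [← Real.sSup_neg, ← image_neg_eq_neg, image_image]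
    rfl
  rw [Shigh, Ilow, ← Real.sInf_neg]
  congr 1
  ext a
  simp only [hneg, mem_ofPred_eq, Set.mem_neg, neg_eq_iff_eq_neg]

theorem Shigh_le_sSup_image_ball (hx : x ∈ Om ∩ D) (hδ : 0 < δ) :
    Shigh D Om f x ≤ sSup (f '' (ball x δ ∩ (Om ∩ D))) := by
  rw [Shigh_eq_sInf_image_ball]
  refine csInf_le ⟨min (f x) 0, ?_⟩ (mem_image_of_mem _ hδ)
  rintro _ ⟨r, hr, rfl⟩
  by_cases hb : BddAbove (f '' (ball x r ∩ (Om ∩ D)))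
  · exact (min_le_left _ _).trans (le_csSup hb ⟨x, ⟨mem_ball_self hr, hx⟩, rfl⟩)
  · exact (min_le_right _ _).trans (Real.sSup_of_not_bddAbove hb).ge

theorem frequently_lt_of_lt_Shigh (hx : x ∈ Om ∩ D) (hc : c < Shigh D Om f x) :
    ∃ᶠ y in 𝓝[Om ∩ D] x, c < f y := by
  refine nhdsWithin_basis_ball.frequently_iff.2 fun δ hδ => ?_
  have hne : (f '' (ball x δ ∩ (Om ∩ D))).Nonempty := ⟨f x, x, ⟨mem_ball_self hδ, hx⟩, rfl⟩
  obtain ⟨_, ⟨y, hy, rfl⟩, hcy⟩ :=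
    exists_lt_of_lt_csSup hne (hc.trans_le (Shigh_le_sSup_image_ball hx hδ))
  exact ⟨y, hy, hcy⟩

theorem eventually_lt_of_Shigh_lt (hb : ∀ δ, BddAbove (f '' (ball x δ ∩ (Om ∩ D))))
    (hc : Shigh D Om f x < c) : ∀ᶠ y in 𝓝[Om ∩ D] x, f y < c := by
  rw [Shigh_eq_sInf_image_ball] at hc
  obtain ⟨_, ⟨δ, hδ, rfl⟩, hlt⟩ := exists_lt_of_csInf_lt (nonempty_Ioi.image _) hc
  exact nhdsWithin_basis_ball.eventually_iff.2
    ⟨δ, hδ, fun y hy => (le_csSup (hb δ) (mem_image_of_mem f hy)).trans_lt hlt⟩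

/- The supremum of an unbounded set of reals is `0`, so if `f` is unbounded above on one ball, the
large balls about any other point force `Shigh Om Om f ≤ 0`, hence `f ≤ 0`, on all of `Om`. -/
theorem bddAbove_image_ball_of_le_Shigh (h : ∀ y ∈ Om, f y ≤ Shigh Om Om f y) (x : Pt n) (δ : ℝ) :
    BddAbove (f '' (ball x δ ∩ Om)) := by
  by_contra hb
  refine hb ⟨0, ?_⟩
  rintro _ ⟨z, ⟨hzx, hz⟩, rfl⟩
  have hsub : ball x δ ⊆ ball z (δ + dist x z) := ball_subset_ball' le_rfl
  have hb' : ¬BddAbove (f '' (ball z (δ + dist x z) ∩ Om)) := fun hb' =>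
    hb (hb'.mono (image_mono (inter_subset_inter_left Om hsub)))
  have hpos : 0 < δ + dist x z := add_pos_of_pos_of_nonneg (pos_of_mem_ball hzx) dist_nonneg
  calc f z ≤ Shigh Om Om f z := h z hz
    _ ≤ sSup (f '' (ball z (δ + dist x z) ∩ (Om ∩ Om))) := Shigh_le_sSup_image_ball ⟨hz, hz⟩ hpos
    _ = 0 := by rw [inter_self, Real.sSup_of_not_bddAbove hb']

theorem upperSemicontinuousOn_of_Shigh_eq (h : ∀ x ∈ Om, Shigh Om Om f x = f x) :
    UpperSemicontinuousOn f Om := by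
  intro x hx c hc
  have hb (δ : ℝ) : BddAbove (f '' (ball x δ ∩ (Om ∩ Om))) := by
    simpa only [inter_self] using bddAbove_image_ball_of_le_Shigh (fun y hy => (h y hy).ge) x δ
  simpa only [inter_self] using eventually_lt_of_Shigh_lt hb ((h x hx).trans_lt hc)

theorem lowerSemicontinuousOn_of_Ilow_eq (h : ∀ x ∈ Om, Ilow Om Om f x = f x) :
    LowerSemicontinuousOn f Om :=
  upperSemicontinuousOn_neg.1 <|
    upperSemicontinuousOn_of_Shigh_eq fun x hx => by rw [Shigh_neg, h x hx, Pi.neg_apply]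

end Baire

theorem LocBddOn.sup {n : ℕ} {Om D : Set (Pt n)} {f g : Pt n → ℝ} (hf : LocBddOn Om D f)
    (hg : LocBddOn Om D g) : LocBddOn Om D (f ⊔ g) := by
  intro x hx
  obtain ⟨δ, hδ, M, hM⟩ := hf x hx
  obtain ⟨δ', hδ', M', hM'⟩ := hg x hx
  refine ⟨min δ δ', lt_min hδ hδ', max M M', fun y hy hyδ hyD => ?_⟩
  exact abs_max_le_max_abs_abs.trans_lt <| max_lt_max
    (hM y hy (hyδ.trans_le (min_le_left _ _)) hyD) (hM' y hy (hyδ.trans_le (min_le_right _ _)) hyD)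

namespace HContPair

variable {n : ℕ} {Om : Set (Pt n)} {u v u' v' w : Pt n → ℝ} {x : Pt n}

theorem le (h : HContPair Om u v) (hx : x ∈ Om) : u x ≤ v x :=
  h.1.2.2 x hx

theorem Ilow_eq_and_Shigh_eq (h : HContPair Om u v) (hw : LocBddOn Om Om w)
    (huwv : ∀ y ∈ Om, u y ≤ w y ∧ w y ≤ v y) (hx : x ∈ Om) :
    Ilow Om Om w x = u x ∧ Shigh Om Om w x = v x :=
  h.2 w w hw hw (fun y hy => ⟨(huwv y hy).1, le_rfl, (huwv y hy).2⟩) x hx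

theorem sCont (h : HContPair Om u v) : SCont Om u v :=
  h.2 u v h.1.1 h.1.2.1 fun _ hx => ⟨le_rfl, h.le hx, le_rfl⟩

theorem lowerSemicontinuousOn (h : HContPair Om u v) : LowerSemicontinuousOn u Om :=
  lowerSemicontinuousOn_of_Ilow_eq fun x hx => (h.sCont x hx).1

theorem upperSemicontinuousOn (h : HContPair Om u v) : UpperSemicontinuousOn v Om :=
  upperSemicontinuousOn_of_Shigh_eq fun x hx => (h.sCont x hx).2

theorem upperSemicontinuousOn_sub (h : HContPair Om u v) :
    UpperSemicontinuousOn (fun y => v y - u y) Om := by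
  simpa only [sub_eq_add_neg, Pi.neg_apply] using
    h.upperSemicontinuousOn.add (upperSemicontinuousOn_neg.2 h.lowerSemicontinuousOn)

theorem frequently_sub_lt (h : HContPair Om u v) (hx : x ∈ Om) {ε : ℝ} (hε : 0 < ε) :
    ∃ᶠ y in 𝓝[Om] x, v y - u y < ε := by
  have hS : Shigh Om Om u x = v x :=
    (h.Ilow_eq_and_Shigh_eq h.1.1 (fun y hy => ⟨le_rfl, h.le hy⟩) hx).2
  have hu : ∃ᶠ y in 𝓝[Om] x, v x - ε / 2 < u y := by
    simpa only [inter_self] using frequently_lt_of_lt_Shigh ⟨hx, hx⟩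
      ((sub_lt_self (v x) (half_pos hε)).trans_eq hS.symm)
  have hv : ∀ᶠ y in 𝓝[Om] x, v y < v x + ε / 2 :=
    h.upperSemicontinuousOn x hx _ (lt_add_of_pos_right _ (half_pos hε))
  refine (hu.and_eventually hv).mono fun y hy => ?_
  linarith [hy.1, hy.2]

theorem eventually_residual_eq (h : HContPair Om u v) (hOm : IsOpen Om) :
    ∀ᶠ x in residual (Pt n), x ∈ Om → u x = v x := by
  filter_upwards [eventually_residual_nonpos_of_frequently_lt hOm h.upperSemicontinuousOn_sub
    fun x hx ε hε => h.frequently_sub_lt hx hε] with x hx hxOm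
  exact (h.le hxOm).antisymm (sub_nonpos.1 (hx hxOm))

theorem eq_of_forall_le (h : HContPair Om u v) (h' : HContPair Om u' v')
    (huv' : ∀ y ∈ Om, u y ≤ v' y) (hu'v : ∀ y ∈ Om, u' y ≤ v y) (hx : x ∈ Om) :
    u x = u' x ∧ v x = v' x := by
  have hw : LocBddOn Om Om (u ⊔ u') := h.1.1.sup h'.1.1
  obtain ⟨hI, hS⟩ := h.Ilow_eq_and_Shigh_eq hw
    (fun y hy => ⟨le_sup_left, sup_le (h.le hy) (hu'v y hy)⟩) hx
  obtain ⟨hI', hS'⟩ := h'.Ilow_eq_and_Shigh_eq hw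
    (fun y hy => ⟨le_sup_right, sup_le (huv' y hy) (h'.le hy)⟩) hx
  exact ⟨hI.symm.trans hI', hS.symm.trans hS'⟩

theorem eq_of_frequently_le (h : HContPair Om u v) (h' : HContPair Om u' v')
    (hle : ∀ y ∈ Om, ∃ᶠ z in 𝓝[Om] y, u z ≤ v' z ∧ u' z ≤ v z) (hx : x ∈ Om) :
    u x = u' x ∧ v x = v' x :=
  h.eq_of_forall_le h'
    (fun y hy => le_of_frequently_le_of_semicontinuousWithinAt (h.lowerSemicontinuousOn y hy)
      (h'.upperSemicontinuousOn y hy) ((hle y hy).mono fun _ hz => hz.1))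
    (fun y hy => le_of_frequently_le_of_semicontinuousWithinAt (h'.lowerSemicontinuousOn y hy)
      (h.upperSemicontinuousOn y hy) ((hle y hy).mono fun _ hz => hz.2)) hx

end HContPair

section Degenerate

variable {n : ℕ} {Om : Set (Pt n)} {u₁ v₁ u₂ v₂ pl pu : Pt n → ℝ} {x : Pt n}

theorem IsOplus.eq_add (h : IsOplus Om u₁ v₁ u₂ v₂ pl pu) (hx : x ∈ Om) (h₁ : u₁ x = v₁ x)
    (h₂ : u₂ x = v₂ x) : pl x = u₁ x + u₂ x ∧ pu x = u₁ x + u₂ x := by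
  obtain ⟨hl, hlu, hu⟩ := h.2 x hx
  constructor <;> linarith

theorem IsOtimes.eq_mul (h : IsOtimes Om u₁ v₁ u₂ v₂ pl pu) (hx : x ∈ Om) (h₁ : u₁ x = v₁ x)
    (h₂ : u₂ x = v₂ x) : pl x = u₁ x * u₂ x ∧ pu x = u₁ x * u₂ x := by
  obtain ⟨hl, hlu, hu⟩ := h.2 x hx
  simp only [imin, imax, ← h₁, ← h₂, min_self, max_self] at hl hu
  constructor <;> linarith

end Degenerate

theorem stmt14 {n : ℕ} (Om : Set (Pt n)) (hOm : IsOpen Om)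
    (u₁ v₁ u₂ v₂ u₃ v₃ : Pt n → ℝ)
    (h₁ : HContPair Om u₁ v₁) (h₂ : HContPair Om u₂ v₂) (h₃ : HContPair Om u₃ v₃)
    (sl su pl pu ql qu al au bl bu : Pt n → ℝ)
    (hfg : IsOplus Om u₁ v₁ u₂ v₂ sl su)
    (hL : IsOtimes Om sl su u₃ v₃ al au)
    (hfh : IsOtimes Om u₁ v₁ u₃ v₃ pl pu)
    (hgh : IsOtimes Om u₂ v₂ u₃ v₃ ql qu)
    (hR : IsOplus Om pl pu ql qu bl bu) :
    ∀ x ∈ Om, al x = bl x ∧ au x = bu x := by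
  have hdegenerate : ∀ᶠ y in residual (Pt n), y ∈ Om → al y ≤ bu y ∧ bl y ≤ au y := by
    filter_upwards [h₁.eventually_residual_eq hOm, h₂.eventually_residual_eq hOm,
      h₃.eventually_residual_eq hOm] with y e₁ e₂ e₃ hy
    obtain ⟨hsl, hsu⟩ := hfg.eq_add hy (e₁ hy) (e₂ hy)
    obtain ⟨hal, hau⟩ := hL.eq_mul hy (hsl.trans hsu.symm) (e₃ hy)
    obtain ⟨hpl, hpu⟩ := hfh.eq_mul hy (e₁ hy) (e₃ hy)
    obtain ⟨hql, hqu⟩ := hgh.eq_mul hy (e₂ hy) (e₃ hy)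
    obtain ⟨hbl, hbu⟩ := hR.eq_add hy (hpl.trans hpu.symm) (hql.trans hqu.symm)
    have hdistrib : sl y * u₃ y = pl y + ql y := by rw [hsl, hpl, hql, add_mul]
    exact ⟨(hal.trans (hdistrib.trans hbu.symm)).le, (hbl.trans (hdistrib.symm.trans hau.symm)).le⟩
  exact fun x => hL.1.eq_of_frequently_le hR.1 fun y hy =>
    frequently_nhdsWithin_of_eventually_residual hOm hy hdegenerate
end
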